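/- Fix natural numbers d and L, and define the Morton code of x : Fin d → ℕ by morton(x) = ∑_{j<d} ∑_{k<L} (if bit k of x j is set then 2^{k·d + j} else 0). If x, y : Fin d → ℕ satisfy x j ≤ y j for all j and y j < 2^L for all j, then morton(x) ≤ morton(y). -/

import Mathlib

/-!
Collecting the bits of one coordinate `a`, its contribution to the Morton code is `2 ^ j` times the
number obtained by reading the binary digits of `a` in base `2 ^ d`, and `2 ≤ 2 ^ d`. Reading
base-`b` digits in a larger base `B` is monotone, because it expands distances: the last digits
contribute the same to both differences, and the remaining digits have their difference multiplied
by `B` instead of `b`.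
-/

theorem mod_add_sub_eq_mod_add_mul_div_sub_div (b : ℕ) {m n : ℕ} (hmn : m ≤ n) :
    m % b + (n - m) = n % b + b * (n / b - m / b) := by
  have hdiv : b * (m / b) ≤ b * (n / b) := Nat.mul_le_mul_left b (Nat.div_le_div_right hmn)
  have hm := Nat.mod_add_div m b
  have hn := Nat.mod_add_div n b
  rw [Nat.mul_sub]
  omega

section Digits

variable {R : Type*} [Semiring R] {b : ℕ}

theorem ofDigits_digits_eq_mod_add_mul (B : R) (hb : 1 < b) (n : ℕ) :
    Nat.ofDigits B (b.digits n) = (n % b : ℕ) + B * Nat.ofDigits B (b.digits (n / b)) := by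
  rcases n.eq_zero_or_pos with rfl | hn
  · simp [Nat.ofDigits]
  · rw [Nat.digits_def' hb hn, Nat.ofDigits]

theorem ofDigits_digits_add_sub_le [PartialOrder R] [IsOrderedRing R] {B : R} (hb : 1 < b)
    (hbB : (b : R) ≤ B) {m n : ℕ} (hmn : m ≤ n) :
    Nat.ofDigits B (b.digits m) + (n - m : ℕ) ≤ Nat.ofDigits B (b.digits n) := by
  induction n using Nat.strong_induction_on generalizing m with
  | h n ih =>
    rcases n.eq_zero_or_pos with rfl | hn
    · simp [Nat.le_zero.mp hmn]
    have hB : 0 ≤ B := b.cast_nonneg.trans hbB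
    have ih_div := ih (n / b) (Nat.div_lt_self hn hb) (Nat.div_le_div_right (c := b) hmn)
    have hsplit : ((m % b : ℕ) + (n - m : ℕ) : R) = (n % b : ℕ) + b * (n / b - m / b : ℕ) :=
      mod_cast congrArg (Nat.cast : ℕ → R) (mod_add_sub_eq_mod_add_mul_div_sub_div b hmn)
    calc
      Nat.ofDigits B (b.digits m) + (n - m : ℕ)
        = (n % b : ℕ) + (B * Nat.ofDigits B (b.digits (m / b)) + b * (n / b - m / b : ℕ)) := by
          rw [ofDigits_digits_eq_mod_add_mul B hb m, add_right_comm, hsplit, add_assoc,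
            add_comm (_ * _)]
      _ ≤ (n % b : ℕ) + (B * Nat.ofDigits B (b.digits (m / b)) + B * (n / b - m / b : ℕ)) := by
          gcongr
      _ ≤ (n % b : ℕ) + B * Nat.ofDigits B (b.digits (n / b)) := by
          rw [← mul_add]
          gcongr
      _ = Nat.ofDigits B (b.digits n) := (ofDigits_digits_eq_mod_add_mul B hb n).symm

theorem monotone_ofDigits_digits [PartialOrder R] [IsOrderedRing R] {B : R} (hb : 1 < b)
    (hbB : (b : R) ≤ B) : Monotone fun n ↦ Nat.ofDigits B (b.digits n) := fun _ _ hmn ↦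
  (le_add_of_nonneg_right (Nat.cast_nonneg _)).trans (ofDigits_digits_add_sub_le hb hbB hmn)

theorem sum_testBit_pow_eq_ofDigits (B : R) {L a : ℕ} (ha : a < 2 ^ L) :
    (∑ k : Fin L, if a.testBit k then B ^ (k : ℕ) else 0) = Nat.ofDigits B (Nat.digits 2 a) := by
  induction L generalizing a with
  | zero => simp [Nat.lt_one_iff.mp ha, Nat.ofDigits]
  | succ L ih =>
    have hlow : (if a.testBit 0 then B ^ 0 else 0) = ((a % 2 : ℕ) : R) := by
      rcases Nat.mod_two_eq_zero_or_one a with h | h <;> simp [Nat.testBit_zero, h]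
    have hhigh : a / 2 < 2 ^ L := Nat.div_lt_of_lt_mul (by rwa [← pow_succ'])
    rw [ofDigits_digits_eq_mod_add_mul B one_lt_two, ← ih hhigh, Fin.sum_univ_succ, Finset.mul_sum]
    refine congrArg₂ (· + ·) hlow (Finset.sum_congr rfl fun k _ ↦ ?_)
    rw [Fin.val_succ, Nat.testBit_succ, mul_ite, mul_zero, pow_succ']

end Digits

theorem sum_testBit_two_pow_eq_two_pow_mul_ofDigits (d j : ℕ) {L a : ℕ} (ha : a < 2 ^ L) :
    (∑ k : Fin L, if a.testBit k then 2 ^ ((k : ℕ) * d + j) else 0) =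
      2 ^ j * Nat.ofDigits (2 ^ d) (Nat.digits 2 a) := by
  rw [← sum_testBit_pow_eq_ofDigits _ ha, Finset.mul_sum]
  refine Finset.sum_congr rfl fun k _ ↦ ?_
  rw [mul_ite, mul_zero, ← pow_mul, ← pow_add, mul_comm d, add_comm j]

/-- Monotonicity of the Morton (Z-curve) code with respect to the
coordinatewise order, for coordinates using at most `L` bits. -/
theorem morton_monotone (d L : ℕ) (x y : Fin d → ℕ)
    (hxy : ∀ j, x j ≤ y j) (hy : ∀ j, y j < 2 ^ L) :
    (∑ j : Fin d, ∑ k : Fin L,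
        if Nat.testBit (x j) (k : ℕ) then 2 ^ ((k : ℕ) * d + (j : ℕ)) else 0)
      ≤ ∑ j : Fin d, ∑ k : Fin L,
        if Nat.testBit (y j) (k : ℕ) then 2 ^ ((k : ℕ) * d + (j : ℕ)) else 0 := by
  refine Finset.sum_le_sum fun j _ ↦ ?_
  have hbase : 2 ≤ 2 ^ d := Nat.le_self_pow j.pos.ne' 2
  rw [sum_testBit_two_pow_eq_two_pow_mul_ofDigits d j ((hxy j).trans_lt (hy j)),
    sum_testBit_two_pow_eq_two_pow_mul_ofDigits d j (hy j)]
  exact Nat.mul_le_mul_left _ (monotone_ofDigits_digits one_lt_two hbase (hxy j))
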